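/- Let t_n denote the cardinality of NC(T_n) (so t_0 = 1, t_1 = 2, t_2 = 5, …). In the ring of formal power series ℤ⟦X⟧, the generating function T(X) = Σ_{n≥0} t_n X^n satisfies (1 − 2X)^2 · T(X) = (1 − X)^2; equivalently T(X) = (1−X)^2/(1−2X)^2. -/

import Mathlib

/-!
Cut a noncrossing partition of `T_n` between `x_b` and `x_{b+1}`, where `x_{b+1}` is the first point
on the line in the block of `y`, or after `x_n` if `y` is alone. The points on either side of the
cut are partitioned into intervals, independently of each other, and `y` belongs to the first
interval after the cut, if there is one. Hence `T = C ^ 2` with `C = ∑ c_n X ^ n`, where `c_n` is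
the number of partitions of `n` ordered points into intervals: `c_0 = 1`, `c_n = 2 ^ (n - 1)`
otherwise, so that `(1 - 2X) C = 1 - X`.

Equivalently, sliding `y` to the place of `x_{b+1}` turns the blocks into intervals, and these are
determined by the set of positions in `{0, …, n}` that separate consecutive points. This set must
contain `0`, `n` and `b` and is otherwise arbitrary.
-/

open Finset

/-- A finpartition of a finite set of points in the plane is *noncrossing* if the
convex hulls (over `ℝ`) of its blocks are pairwise disjoint. -/
def IsNoncrossing {P : Finset ℂ} (π : Finpartition P) : Prop :=
  (π.parts : Set (Finset ℂ)).Pairwise fun B₁ B₂ =>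
    Disjoint (convexHull ℝ (B₁ : Set ℂ)) (convexHull ℝ (B₂ : Set ℂ))

/-- The poset `NC(P)` of noncrossing partitions of `P`, ordered by refinement:
`π ≤ μ` iff every block of `μ` is a union of blocks of `π`. -/
abbrev NC (P : Finset ℂ) : Type := {π : Finpartition P // IsNoncrossing π}

/-- The blocks of a noncrossing partition. -/
def NC.parts {P : Finset ℂ} (π : NC P) : Finset (Finset ℂ) := π.1.parts

/-- Two points lie in a common block of a noncrossing partition. -/
def NC.SameBlock {P : Finset ℂ} (π : NC P) (a b : ℂ) : Prop :=
  ∃ B ∈ π.parts, a ∈ B ∧ b ∈ B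

/-- The configuration `T_n = {1, …, n} ∪ {i} ⊆ ℂ`: the points `x_k = k` for
`1 ≤ k ≤ n` together with `y = i`. -/
noncomputable def Tconfig (n : ℕ) : Finset ℂ :=
  ((Finset.Icc 1 n).image fun k : ℕ => (k : ℂ)) ∪ {Complex.I}

section Convexity

theorem mem_convexHull_sep_eq_zero {E : Type*} [AddCommGroup E] [Module ℝ E] (f : E →ₗ[ℝ] ℝ)
    {s : Set E} (hs : ∀ w ∈ s, 0 ≤ f w) {z : E} (hz : z ∈ convexHull ℝ s) (hz₀ : f z = 0) :
    z ∈ convexHull ℝ {w ∈ s | f w = 0} := by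
  suffices h : convexHull ℝ s ⊆ {w | 0 ≤ f w ∧ (f w = 0 → w ∈ convexHull ℝ {w ∈ s | f w = 0})} from
    (h hz).2 hz₀
  refine convexHull_min (fun w hw => ⟨hs w hw, fun h => subset_convexHull ℝ _ ⟨hw, h⟩⟩) ?_
  rintro u ⟨hu, hu'⟩ v ⟨hv, hv'⟩ a b ha hb hab
  have hau := mul_nonneg ha hu
  have hbv := mul_nonneg hb hv
  simp only [Set.mem_ofPred_eq, map_add, map_smul, smul_eq_mul]
  refine ⟨add_nonneg hau hbv, fun h => ?_⟩
  obtain ⟨hau₀, hbv₀⟩ := (add_eq_zero_iff_of_nonneg hau hbv).1 h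
  rcases mul_eq_zero.1 hau₀ with rfl | hu₀
  · obtain rfl : b = 1 := by simpa using hab
    simpa using hv' (by simpa using hbv₀)
  rcases mul_eq_zero.1 hbv₀ with rfl | hv₀
  · obtain rfl : a = 1 := by simpa using hab
    simpa using hu' hu₀
  exact convex_convexHull ℝ _ (hu' hu₀) (hv' hv₀) ha hb hab

theorem exists_le_re_le_of_mem_convexHull {s : Set ℂ} (hs : ∀ w ∈ s, 0 ≤ w.im) {z : ℂ}
    (hz : z ∈ convexHull ℝ s) (hz₀ : z.im = 0) :
    ∃ a b : ℝ, (a : ℂ) ∈ s ∧ (b : ℂ) ∈ s ∧ a ≤ z.re ∧ z.re ≤ b := by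
  have hz' : z ∈ convexHull ℝ {w ∈ s | w.im = 0} :=
    mem_convexHull_sep_eq_zero Complex.imLm hs hz hz₀
  have ofReal_re_mem : ∀ w ∈ {w ∈ s | w.im = 0}, (w.re : ℂ) ∈ s := by
    rintro w ⟨hw, hw₀⟩
    rwa [show (w.re : ℂ) = w from Complex.ext rfl hw₀.symm]
  obtain ⟨u, hu, hu'⟩ := (Complex.reLm.concaveOn convex_univ).exists_le_of_mem_convexHull
    (Set.subset_univ _) hz'
  obtain ⟨v, hv, hv'⟩ := (Complex.reLm.convexOn convex_univ).exists_ge_of_mem_convexHull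
    (Set.subset_univ _) hz'
  exact ⟨u.re, v.re, ofReal_re_mem u hu, ofReal_re_mem v hv, hu', hv'⟩

theorem ofReal_mem_convexHull {s : Set ℂ} {a b x : ℝ} (ha : (a : ℂ) ∈ s) (hb : (b : ℂ) ∈ s)
    (hax : a ≤ x) (hxb : x ≤ b) : (x : ℂ) ∈ convexHull ℝ s := by
  refine segment_subset_convexHull ha hb ?_
  have hx : x ∈ segment ℝ a b := by
    rw [segment_eq_Icc (hax.trans hxb)]
    exact ⟨hax, hxb⟩
  obtain ⟨s, t, hs, ht, hst, rfl⟩ := hx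
  exact ⟨s, t, hs, ht, hst, by simp⟩

end Convexity

section Criterion

variable {P : Finset ℂ}

theorem IsNoncrossing.mem_of_mem_convexHull {π : Finpartition P} (hπ : IsNoncrossing π)
    {B : Finset ℂ} (hB : B ∈ π.parts) {z : ℂ} (hzP : z ∈ P)
    (hz : z ∈ convexHull ℝ (B : Set ℂ)) : z ∈ B := by
  by_contra hzB
  have hz' : z ∈ π.part z := π.mem_part hzP
  exact Set.disjoint_left.1 (hπ (π.part_mem.2 hzP) hB fun h => hzB (h ▸ hz'))
    (subset_convexHull ℝ _ hz') hz

theorem isNoncrossing_of_forall_ofReal_mem (hP : ∀ z ∈ P, 0 ≤ z.im)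
    (hP' : {z | z ∈ P ∧ z.im ≠ 0}.Subsingleton) {π : Finpartition P}
    (hπ : ∀ B ∈ π.parts, ∀ a b x : ℝ, (a : ℂ) ∈ B → (b : ℂ) ∈ B → (x : ℂ) ∈ P →
      a ≤ x → x ≤ b → (x : ℂ) ∈ B) : IsNoncrossing π := by
  intro B₁ h₁ B₂ h₂ hne
  rw [Set.disjoint_left]
  intro z hz₁ hz₂
  have disjoint_blocks : ∀ w ∈ B₁, w ∉ B₂ := Finset.disjoint_left.1 (π.disjoint h₁ h₂ hne)
  have im_eq_zero : ∀ B : Finset ℂ, z ∈ convexHull ℝ (B : Set ℂ) → (∀ w ∈ B, w.im = 0) →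
      z.im = 0 := fun B hz hB =>
    convexHull_min (t := {w : ℂ | w.im = 0}) hB (convex_hyperplane Complex.imLm.isLinear 0) hz
  have hz₀ : z.im = 0 := by
    by_contra hz₀
    have h₁' := mt (im_eq_zero B₁ hz₁) hz₀
    have h₂' := mt (im_eq_zero B₂ hz₂) hz₀
    push Not at h₁' h₂'
    obtain ⟨u, hu, hu₀⟩ := h₁'
    obtain ⟨v, hv, hv₀⟩ := h₂'
    obtain rfl := hP' ⟨π.le h₁ hu, hu₀⟩ ⟨π.le h₂ hv, hv₀⟩
    exact disjoint_blocks u hu hv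
  obtain ⟨a, a', ha, ha', haz, hza'⟩ :=
    exists_le_re_le_of_mem_convexHull (fun w hw => hP w (π.le h₁ hw)) hz₁ hz₀
  obtain ⟨b, b', hb, hb', hbz, hzb'⟩ :=
    exists_le_re_le_of_mem_convexHull (fun w hw => hP w (π.le h₂ hw)) hz₂ hz₀
  -- Of two left ends, the right one lies between two points of the other block.
  rcases le_total a b with hab | hba
  · exact disjoint_blocks b (hπ B₁ h₁ a a' b ha ha' (π.le h₂ hb) hab (hbz.trans hza')) hb
  · exact disjoint_blocks a ha (hπ B₂ h₂ b b' a hb hb' (π.le h₁ ha) hba (haz.trans hzb'))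

/-- The partition of a finite set into the nonempty fibers of a function. -/
noncomputable def fiberPartition {β α : Type*} [DecidableEq β] (P : Finset β) (g : β → α) :
    Finpartition P :=
  open Classical in Finpartition.ofSetSetoid (Setoid.ker g) P

theorem mem_part_fiberPartition {β α : Type*} [DecidableEq β] {P : Finset β} {g : β → α}
    {z w : β} : w ∈ (fiberPartition P g).part z ↔ z ∈ P ∧ w ∈ P ∧ g z = g w := by
  classical exact Finpartition.mem_part_ofSetSetoid_iff_rel P

theorem isNoncrossing_fiberPartition {α : Type*} [PartialOrder α] (hP : ∀ z ∈ P, 0 ≤ z.im)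
    (hP' : {z | z ∈ P ∧ z.im ≠ 0}.Subsingleton) {g : ℂ → α}
    (hg : MonotoneOn (fun x : ℝ => g x) {x : ℝ | (x : ℂ) ∈ P}) :
    IsNoncrossing (fiberPartition P g) := by
  refine isNoncrossing_of_forall_ofReal_mem hP hP' fun B hB a b x ha hb hx hax hxb => ?_
  have haP := (fiberPartition P g).le hB ha
  have hbP := (fiberPartition P g).le hB hb
  rw [← (fiberPartition P g).part_eq_of_mem hB ha] at hb ⊢
  have hab : g a = g b := (mem_part_fiberPartition.1 hb).2.2
  exact mem_part_fiberPartition.2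
    ⟨haP, hx, le_antisymm (hg haP hx hax) (hab ▸ hg hx hbP hxb)⟩

end Criterion

section Tconfig

variable {n : ℕ}

theorem mem_Tconfig_iff {z : ℂ} :
    z ∈ Tconfig n ↔ z = Complex.I ∨ ∃ k : ℕ, (1 ≤ k ∧ k ≤ n) ∧ z = k := by
  simp only [Tconfig, mem_union, mem_image, mem_Icc, mem_singleton, eq_comm, or_comm]

theorem I_mem_Tconfig : Complex.I ∈ Tconfig n := mem_Tconfig_iff.2 (Or.inl rfl)

theorem natCast_ne_I (k : ℕ) : (k : ℂ) ≠ Complex.I := fun h => by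
  simpa using congrArg Complex.im h

theorem natCast_mem_Tconfig {k : ℕ} : (k : ℂ) ∈ Tconfig n ↔ 1 ≤ k ∧ k ≤ n := by
  simp [mem_Tconfig_iff, natCast_ne_I]

theorem im_nonneg_of_mem_Tconfig {z : ℂ} (hz : z ∈ Tconfig n) : 0 ≤ z.im := by
  rcases mem_Tconfig_iff.1 hz with rfl | ⟨k, -, rfl⟩ <;> simp

theorem subsingleton_im_ne_zero_Tconfig : {z | z ∈ Tconfig n ∧ z.im ≠ 0}.Subsingleton := by
  have eq_I : ∀ z ∈ {z | z ∈ Tconfig n ∧ z.im ≠ 0}, z = Complex.I := by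
    rintro z ⟨hz, hz₀⟩
    rcases mem_Tconfig_iff.1 hz with rfl | ⟨k, -, rfl⟩
    · rfl
    · simp at hz₀
  exact fun z hz w hw => (eq_I z hz).trans (eq_I w hw).symm

end Tconfig

section Cuts

/-- The elements of `D` below `k`: two points on the line are separated by a cut in `D` if and only
if their indices have different values of `cutsBelow D`. -/
def cutsBelow (D : Finset ℕ) (k : ℕ) : Finset ℕ := {d ∈ D | d < k}

theorem cutsBelow_mono (D : Finset ℕ) : Monotone (cutsBelow D) :=
  fun _ _ hjk => monotone_filter_right D fun _ _ hd => lt_of_lt_of_le hd hjk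

theorem cutsBelow_eq_iff {D : Finset ℕ} {j k : ℕ} (hjk : j ≤ k) :
    cutsBelow D j = cutsBelow D k ↔ ∀ d, j ≤ d → d < k → d ∉ D := by
  simp only [cutsBelow, Finset.ext_iff, mem_filter]
  grind

theorem cutsBelow_succ_eq_iff {D : Finset ℕ} {d : ℕ} :
    cutsBelow D d = cutsBelow D (d + 1) ↔ d ∉ D := by
  rw [cutsBelow_eq_iff d.le_succ]
  exact ⟨fun h => h d le_rfl d.lt_succ_self,
    fun h e hde hed => (Nat.le_antisymm hde (Nat.lt_succ_iff.1 hed)) ▸ h⟩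

/-- The place on the line taken by a point of the configuration when `y` is slid to the place
`b + 1`: the point `x_k` goes to `k` and `y` goes to `b + 1`. -/
noncomputable def position (b : ℕ) (z : ℂ) : ℕ := if z.im = 0 then ⌊z.re⌋₊ else b + 1

theorem position_natCast (b k : ℕ) : position b k = k := by simp [position]

theorem position_I (b : ℕ) : position b Complex.I = b + 1 := by simp [position]

end Cuts

namespace NC

section SameBlock

variable {P : Finset ℂ} {π σ : NC P} {z w v : ℂ}

theorem sameBlock_iff_mem_part : π.SameBlock z w ↔ w ∈ π.1.part z := by
  rw [π.1.mem_part_iff_exists]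
  exact exists_congr fun _ => and_congr_right' and_comm

theorem SameBlock.left_mem (h : π.SameBlock z w) : z ∈ P := by
  obtain ⟨B, hB, hz, -⟩ := h
  exact π.1.le hB hz

theorem SameBlock.symm (h : π.SameBlock z w) : π.SameBlock w z := by
  obtain ⟨B, hB, hz, hw⟩ := h
  exact ⟨B, hB, hw, hz⟩

theorem sameBlock_comm : π.SameBlock z w ↔ π.SameBlock w z := ⟨SameBlock.symm, SameBlock.symm⟩

theorem SameBlock.right_mem (h : π.SameBlock z w) : w ∈ P := h.symm.left_mem

theorem sameBlock_self (hz : z ∈ P) : π.SameBlock z z :=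
  sameBlock_iff_mem_part.2 (π.1.mem_part hz)

theorem SameBlock.trans (h : π.SameBlock z w) (h' : π.SameBlock w v) : π.SameBlock z v := by
  obtain ⟨B, hB, hz, hw⟩ := h
  obtain ⟨B', hB', hw', hv⟩ := h'
  obtain rfl := π.1.eq_of_mem_parts hB hB' hw hw'
  exact ⟨B, hB, hz, hv⟩

theorem SameBlock.of_le_of_le {a x b : ℝ} (h : π.SameBlock a b) (hx : (x : ℂ) ∈ P) (hax : a ≤ x)
    (hxb : x ≤ b) : π.SameBlock a x := by
  obtain ⟨B, hB, ha, hb⟩ := h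
  exact ⟨B, hB, ha, π.2.mem_of_mem_convexHull hB hx (ofReal_mem_convexHull ha hb hax hxb)⟩

theorem ext_of_sameBlock (h : ∀ z ∈ P, ∀ w ∈ P, π.SameBlock z w ↔ σ.SameBlock z w) : π = σ := by
  have part_eq : ∀ z ∈ P, π.1.part z = σ.1.part z := by
    intro z hz
    ext w
    rw [← sameBlock_iff_mem_part, ← sameBlock_iff_mem_part]
    exact ⟨fun hw => (h z hz w hw.right_mem).1 hw, fun hw => (h z hz w hw.right_mem).2 hw⟩
  have parts_subset : ∀ {τ ρ : NC P}, (∀ z ∈ P, τ.1.part z = ρ.1.part z) →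
      τ.1.parts ⊆ ρ.1.parts := by
    intro τ ρ hτρ B hB
    obtain ⟨z, hz, rfl⟩ := τ.1.part_surjOn hB
    exact hτρ z hz ▸ ρ.1.part_mem.2 hz
  exact Subtype.ext <| Finpartition.ext <|
    (parts_subset part_eq).antisymm (parts_subset fun z hz => (part_eq z hz).symm)

end SameBlock

section Tconfig

variable {n : ℕ}

theorem SameBlock.of_natCast {π : NC (Tconfig n)} {j k l : ℕ} (h : π.SameBlock j l) (hjk : j ≤ k)
    (hkl : k ≤ l) : π.SameBlock j k := by
  have hj := natCast_mem_Tconfig.1 h.left_mem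
  have hl := natCast_mem_Tconfig.1 h.right_mem
  have hk : (k : ℂ) ∈ Tconfig n := natCast_mem_Tconfig.2 ⟨hj.1.trans hjk, hkl.trans hl.2⟩
  simp only [← Complex.ofReal_natCast] at h hk ⊢
  exact h.of_le_of_le hk (by exact_mod_cast hjk) (by exact_mod_cast hkl)

/-- The positions `d ∈ {0, …, n}` separating `x_d` from `x_{d+1}`. As `x_0` and `x_{n+1}` are not in
the configuration, `0` and `n` are always cuts. -/
noncomputable def cuts (π : NC (Tconfig n)) : Finset ℕ :=
  open Classical in {d ∈ range (n + 1) | ¬ π.SameBlock d (d + 1 : ℕ)}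

/-- The number `b` of points `x_1, …, x_b` preceding the first point on the line in the block of
`y`; if `y` is a singleton block, then `b = n`. -/
noncomputable def pivot (π : NC (Tconfig n)) : ℕ :=
  sInf {b | b = n ∨ π.SameBlock Complex.I (b + 1 : ℕ)}

variable {π σ : NC (Tconfig n)}

theorem mem_cuts {d : ℕ} : d ∈ π.cuts ↔ d ≤ n ∧ ¬ π.SameBlock d (d + 1 : ℕ) := by
  simp [cuts]

theorem cuts_subset_range : π.cuts ⊆ range (n + 1) := by
  classical exact filter_subset _ _

theorem zero_mem_cuts : 0 ∈ π.cuts :=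
  mem_cuts.2 ⟨n.zero_le, fun h => by simpa using (natCast_mem_Tconfig.1 h.left_mem).1⟩

theorem self_mem_cuts : n ∈ π.cuts :=
  mem_cuts.2 ⟨le_rfl, fun h => by simpa using (natCast_mem_Tconfig.1 h.right_mem).2⟩

theorem pivot_eq_or_sameBlock : π.pivot = n ∨ π.SameBlock Complex.I (π.pivot + 1 : ℕ) :=
  Nat.sInf_mem (s := {b | b = n ∨ π.SameBlock Complex.I (b + 1 : ℕ)}) ⟨n, Or.inl rfl⟩

theorem pivot_le_of_sameBlock {b : ℕ} (h : π.SameBlock Complex.I (b + 1 : ℕ)) : π.pivot ≤ b :=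
  Nat.sInf_le (Or.inr h)

theorem pivot_le : π.pivot ≤ n := Nat.sInf_le (Or.inl rfl)

theorem pivot_mem_cuts : π.pivot ∈ π.cuts := by
  rcases π.pivot_eq_or_sameBlock with h | hI
  · rw [h]
    exact self_mem_cuts
  refine mem_cuts.2 ⟨pivot_le, fun h => ?_⟩
  obtain ⟨b, hb⟩ : ∃ b, π.pivot = b + 1 :=
    Nat.exists_eq_add_one.2 (natCast_mem_Tconfig.1 h.left_mem).1
  have hIb : π.SameBlock Complex.I (b + 1 : ℕ) := by
    rw [← hb]
    exact hI.trans h.symm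
  have := pivot_le_of_sameBlock hIb
  omega

theorem sameBlock_I_iff_sameBlock_pivot {k : ℕ} :
    π.SameBlock Complex.I k ↔ π.SameBlock (π.pivot + 1 : ℕ) k := by
  rcases π.pivot_eq_or_sameBlock with h | hI
  · refine iff_of_false (fun hk => ?_) fun hk => ?_
    · obtain ⟨hk₁, hkn⟩ := natCast_mem_Tconfig.1 hk.right_mem
      obtain ⟨b, rfl⟩ := Nat.exists_eq_add_one.2 hk₁
      have := pivot_le_of_sameBlock hk
      omega
    · have := (natCast_mem_Tconfig.1 hk.left_mem).2
      omega
  · exact ⟨hI.symm.trans, hI.trans⟩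

theorem sameBlock_natCast_iff_of_le {j k : ℕ} (hj : 1 ≤ j) (hjn : j ≤ n) (hjk : j ≤ k)
    (hkn : k ≤ n + 1) :
    π.SameBlock j k ↔ cutsBelow π.cuts j = cutsBelow π.cuts k := by
  rw [cutsBelow_eq_iff hjk]
  constructor
  · intro h d hjd hdk hd
    exact (mem_cuts.1 hd).2
      ((h.of_natCast hjd hdk.le).symm.trans (h.of_natCast (hjd.trans d.le_succ) hdk))
  · intro h
    induction k, hjk using Nat.le_induction with
    | base => exact sameBlock_self (natCast_mem_Tconfig.2 ⟨hj, hjn⟩)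
    | succ k hjk ih =>
      have hk : π.SameBlock k (k + 1 : ℕ) := by
        by_contra hk
        exact h k hjk k.lt_succ_self (mem_cuts.2 ⟨by omega, hk⟩)
      exact (ih (by omega) fun d hjd hdk => h d hjd (by omega)).trans hk

theorem sameBlock_natCast_iff {j k : ℕ} (hj : 1 ≤ j) (hjn : j ≤ n) (hk : 1 ≤ k)
    (hkn : k ≤ n + 1) : π.SameBlock j k ↔ cutsBelow π.cuts j = cutsBelow π.cuts k := by
  rcases le_total j k with hjk | hkj
  · exact sameBlock_natCast_iff_of_le hj hjn hjk hkn
  · rw [sameBlock_comm, eq_comm]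
    exact sameBlock_natCast_iff_of_le hk (hkj.trans hjn) hkj (hjn.trans n.le_succ)

theorem sameBlock_iff_cutsBelow_position {z w : ℂ} (hz : z ∈ Tconfig n) (hw : w ∈ Tconfig n) :
    π.SameBlock z w ↔
      cutsBelow π.cuts (position π.pivot z) = cutsBelow π.cuts (position π.pivot w) := by
  have sameBlock_I_iff : ∀ k : ℕ, 1 ≤ k → k ≤ n →
      (π.SameBlock Complex.I k ↔ cutsBelow π.cuts (π.pivot + 1) = cutsBelow π.cuts k) :=
    fun k hk hkn => by
      rw [sameBlock_I_iff_sameBlock_pivot, sameBlock_comm, eq_comm]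
      exact sameBlock_natCast_iff hk hkn (by omega) (by simpa using pivot_le)
  rcases mem_Tconfig_iff.1 hz with rfl | ⟨j, ⟨hj, hjn⟩, rfl⟩ <;>
    rcases mem_Tconfig_iff.1 hw with rfl | ⟨k, ⟨hk, hkn⟩, rfl⟩ <;>
    simp only [position_I, position_natCast]
  · simpa using sameBlock_self I_mem_Tconfig
  · exact sameBlock_I_iff k hk hkn
  · rw [sameBlock_comm, eq_comm, sameBlock_I_iff j hj hjn]
  · exact sameBlock_natCast_iff hj hjn hk (hkn.trans n.le_succ)

theorem eq_of_pivot_eq_of_cuts_eq (hpivot : π.pivot = σ.pivot) (hcuts : π.cuts = σ.cuts) :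
    π = σ :=
  ext_of_sameBlock fun z hz w hw => by
    rw [sameBlock_iff_cutsBelow_position hz hw, sameBlock_iff_cutsBelow_position hz hw, hpivot,
      hcuts]

/-- The noncrossing partition of `T_n` with pivot `b` and set of cuts `D`, provided that
`{0, b, n} ⊆ D ⊆ {0, …, n}`. -/
noncomputable def ofCuts (n b : ℕ) (D : Finset ℕ) : NC (Tconfig n) :=
  ⟨fiberPartition (Tconfig n) fun z => cutsBelow D (position b z),
    isNoncrossing_fiberPartition (fun _ => im_nonneg_of_mem_Tconfig) subsingleton_im_ne_zero_Tconfig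
      fun _ _ _ _ h => cutsBelow_mono D (by simpa [position] using Nat.floor_mono h)⟩

theorem sameBlock_ofCuts {b : ℕ} {D : Finset ℕ} {z w : ℂ} :
    (ofCuts n b D).SameBlock z w ↔ z ∈ Tconfig n ∧ w ∈ Tconfig n ∧
      cutsBelow D (position b z) = cutsBelow D (position b w) :=
  sameBlock_iff_mem_part.trans mem_part_fiberPartition

theorem cuts_ofCuts {b : ℕ} {D : Finset ℕ} (h0 : 0 ∈ D) (hn : n ∈ D) (hD : D ⊆ range (n + 1)) :
    (ofCuts n b D).cuts = D := by
  ext d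
  rw [mem_cuts, sameBlock_ofCuts, position_natCast, position_natCast, natCast_mem_Tconfig,
    natCast_mem_Tconfig, cutsBelow_succ_eq_iff]
  constructor
  · rintro ⟨hdn, hd⟩
    by_contra hdD
    have hd0 : d ≠ 0 := fun h => hdD (h ▸ h0)
    have hdn' : d ≠ n := fun h => hdD (h ▸ hn)
    exact hd ⟨by omega, by omega, hdD⟩
  · exact fun hdD => ⟨Nat.lt_succ_iff.1 (mem_range.1 (hD hdD)), fun h => h.2.2 hdD⟩

theorem pivot_ofCuts {b : ℕ} {D : Finset ℕ} (hb : b ∈ D) (hbn : b ≤ n) :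
    (ofCuts n b D).pivot = b := by
  have sameBlock_I_iff : ∀ c : ℕ, (ofCuts n b D).SameBlock Complex.I (c + 1 : ℕ) ↔
      c < n ∧ cutsBelow D (b + 1) = cutsBelow D (c + 1) := fun c => by
    simp [sameBlock_ofCuts, I_mem_Tconfig, natCast_mem_Tconfig, position_I, position_natCast,
      -Nat.cast_add]
  refine IsLeast.csInf_eq ⟨?_, fun c hc => ?_⟩
  · exact hbn.eq_or_lt.imp_right fun hbn => (sameBlock_I_iff b).2 ⟨hbn, rfl⟩
  · rcases hc with rfl | hc
    · exact hbn
    by_contra! hcb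
    exact (cutsBelow_eq_iff (by omega)).1 ((sameBlock_I_iff c).1 hc).2.symm b hcb b.lt_succ_self hb

theorem range_pivot_cuts (n : ℕ) :
    Set.range (fun π : NC (Tconfig n) => (⟨π.pivot, π.cuts⟩ : Σ _ : ℕ, Finset ℕ)) =
      (range (n + 1)).sigma fun b => Finset.Icc {0, b, n} (range (n + 1)) := by
  ext ⟨b, D⟩
  simp only [Set.mem_range, coe_sigma, Set.mem_sigma_iff, mem_coe, Finset.mem_Icc, mem_range,
    Nat.lt_succ_iff, Finset.insert_subset_iff, singleton_subset_iff]
  constructor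
  · rintro ⟨π, h⟩
    cases h
    exact ⟨pivot_le, ⟨zero_mem_cuts, pivot_mem_cuts, self_mem_cuts⟩, cuts_subset_range⟩
  · rintro ⟨hbn, ⟨h0, hb, hn⟩, hD⟩
    exact ⟨ofCuts n b D, by rw [pivot_ofCuts hb hbn, cuts_ofCuts h0 hn hD]⟩

end Tconfig

end NC

section Counting

theorem card_Icc_insert_range {b n : ℕ} (hbn : b ≤ n) :
    #(Finset.Icc {0, b, n} (range (n + 1))) = 2 ^ (b - 1) * 2 ^ (n - b - 1) := by
  have hsub : ({0, b, n} : Finset ℕ) ⊆ range (n + 1) := by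
    simp [Finset.insert_subset_iff, hbn]
  -- Truncated subtraction accounts for the coincidences `b = 0` and `b = n`.
  have hcard : n + 1 - #({0, b, n} : Finset ℕ) = (b - 1) + (n - b - 1) := by grind
  rw [card_Icc_finset hsub, card_range, hcard, pow_add]

theorem card_NC_Tconfig (n : ℕ) :
    Nat.card (NC (Tconfig n)) = ∑ ij ∈ antidiagonal n, 2 ^ (ij.1 - 1) * 2 ^ (ij.2 - 1) := by
  have hinj : Function.Injective
      fun π : NC (Tconfig n) => (⟨π.pivot, π.cuts⟩ : Σ _ : ℕ, Finset ℕ) := fun π σ h => by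
    simp only [Sigma.mk.injEq, heq_eq_eq] at h
    exact NC.eq_of_pivot_eq_of_cuts_eq h.1 h.2
  rw [← Nat.card_range_of_injective hinj, NC.range_pivot_cuts, Nat.card_coe_set_eq,
    Set.ncard_coe_finset, card_sigma,
    Finset.Nat.sum_antidiagonal_eq_sum_range_succ fun i j => 2 ^ (i - 1) * 2 ^ (j - 1)]
  exact sum_congr rfl fun b hb => card_Icc_insert_range (Nat.lt_succ_iff.1 (mem_range.1 hb))

end Counting

theorem one_sub_C_mul_X_mul_mk_pow_sub_one {R : Type*} [CommRing R] (r : R) :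
    (1 - PowerSeries.C r * PowerSeries.X) * PowerSeries.mk (fun n => r ^ (n - 1)) =
      1 + PowerSeries.C (1 - r) * PowerSeries.X := by
  ext n
  rcases n with _ | _ | n <;>
    simp [sub_mul, mul_assoc, PowerSeries.coeff_succ_X_mul, PowerSeries.coeff_one,
      PowerSeries.coeff_X, pow_succ']

/-- In `ℤ⟦X⟧`, the generating function `T(X) = Σ t_n X^n` of `t_n = |NC(T_n)|`
satisfies `(1 - 2X)^2 ⬝ T(X) = (1 - X)^2`, i.e. `T(X) = (1-X)^2/(1-2X)^2`. -/
theorem nc_T_generating_function :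
    (1 - 2 * PowerSeries.X : PowerSeries ℤ) ^ 2 *
        PowerSeries.mk (fun n => (Nat.card (NC (Tconfig n)) : ℤ)) =
      (1 - PowerSeries.X) ^ 2 := by
  have hT : PowerSeries.mk (fun n => (Nat.card (NC (Tconfig n)) : ℤ)) =
      PowerSeries.mk (fun n => (2 : ℤ) ^ (n - 1)) ^ 2 := by
    ext n
    simp [card_NC_Tconfig, sq, PowerSeries.coeff_mul]
  have hC : (1 - 2 * PowerSeries.X) * PowerSeries.mk (fun n => (2 : ℤ) ^ (n - 1)) =
      1 - PowerSeries.X := by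
    simpa [sub_eq_add_neg] using one_sub_C_mul_X_mul_mk_pow_sub_one (2 : ℤ)
  rw [hT, ← mul_pow, hC]
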